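/- arXiv:1609.08125 — 2 statements merged into one kernel-verified Lean document; each statement's English description precedes it below -/
import Mathlib

section
/- Averaged thinness of boundary shells: Let ω be a locally finite positive Borel measure on ℝⁿ, let R and J be cubes with comparable side lengths (2^{−ρ}ℓ(R) ≤ ℓ(J) ≤ 2^{ρ}ℓ(R)) and J ⊂ 3R, let λ ∈ (0,1/2), and let J′ be a dyadic child of J. Then, averaging over the translation parameterization of dyadic grids, 𝔼_Ω ω( R ∩ [ (J+γ)′ ∖ (J+γ)_λ ] ) ≤ C_ρ λ ω(R), where C_ρ depends only on n and ρ. -/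
open MeasureTheory Set Filter Topology
open scoped ENNReal NNReal Classical

noncomputable section

/-- Euclidean space `ℝⁿ`. -/
abbrev Pt (n : ℕ) : Type := EuclideanSpace ℝ (Fin n)

/-- An axis-parallel half-open cube in `ℝⁿ`, given by its corner `c` and positive
side length `l`. -/
structure Cube (n : ℕ) : Type where
  c : Pt n
  l : ℝ
  lpos : 0 < l

namespace Cube

variable {n : ℕ}

/-- The underlying (half-open) set of the cube. -/
def set (Q : Cube n) : Set (Pt n) := {x | ∀ i, Q.c i ≤ x i ∧ x i < Q.c i + Q.l}

/-- The center of the cube. -/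
def center (Q : Cube n) : Pt n := WithLp.toLp 2 (fun i => Q.c i + Q.l / 2)

/-- The concentric triple `3Q`. -/
def tri (Q : Cube n) : Cube n := ⟨WithLp.toLp 2 (fun i => Q.c i - Q.l), 3 * Q.l, by have := Q.lpos; linarith⟩

/-- The dyadic child of a cube indexed by `e : Fin n → Bool`. -/
def child (Q : Cube n) (e : Fin n → Bool) : Cube n :=
  ⟨WithLp.toLp 2 (fun i => Q.c i + (if e i then Q.l / 2 else 0)), Q.l / 2, by have := Q.lpos; linarith⟩

/-- The translate `Q + γ` of a cube. -/
def trans (Q : Cube n) (γ : Pt n) : Cube n := ⟨WithLp.toLp 2 (fun i => Q.c i + γ i), Q.l, Q.lpos⟩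

/-- The `λ`-interior `Q_λ = {x ∈ Q : dist(x,∂Q) > λ ℓ(Q)}` of a cube. -/
def inn (Q : Cube n) (lam : ℝ) : Set (Pt n) :=
  {x ∈ Q.set | lam * Q.l < Metric.infDist x (frontier Q.set)}

end Cube

/-- The distance between two sets, as an extended nonnegative real. -/
def sDistE {n : ℕ} (s t : Set (Pt n)) : ℝ≥0∞ := ⨅ (x ∈ s) (y ∈ t), edist x y

/-- Side lengths comparable within a factor `Cc` : `1/Cc ≤ ℓ(Q)/ℓ(Q') ≤ Cc`. -/
def sideComp {n : ℕ} (Cc : ℝ) (Q Q' : Cube n) : Prop := Q.l ≤ Cc * Q'.l ∧ Q'.l ≤ Cc * Q.l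

/-- Two cubes touch if their closures intersect, and the intersection is contained in
the boundary of the larger cube. -/
def Touching {n : ℕ} (Q R : Cube n) : Prop :=
  (closure Q.set ∩ closure R.set).Nonempty ∧
  (Q.l ≤ R.l → closure Q.set ∩ closure R.set ⊆ frontier R.set) ∧
  (R.l ≤ Q.l → closure Q.set ∩ closure R.set ⊆ frontier Q.set)

/-- The indicator function of a set. -/
def indic {n : ℕ} (s : Set (Pt n)) : Pt n → ℝ := s.indicator 1

/-- A standard `α`-fractional Calderón–Zygmund kernel in `ℝⁿ`: size and smoothness of
order `1 + δ`, for the kernel and its adjoint. -/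
structure CZKernel (n : ℕ) (α : ℝ) : Type where
  K : Pt n → Pt n → ℝ
  C₀ : ℝ
  Cpos : 0 < C₀
  δ : ℝ
  δpos : 0 < δ
  size : ∀ x y : Pt n, x ≠ y → |K x y| ≤ C₀ * ‖x - y‖ ^ (α - n)
  gradSize : ∀ x y : Pt n, x ≠ y →
    ‖fderiv ℝ (fun z => K z y) x‖ ≤ C₀ * ‖x - y‖ ^ (α - n - 1)
  gradHolder : ∀ x x' y : Pt n, x ≠ y → ‖x - x'‖ ≤ ‖x - y‖ / 2 →
    ‖fderiv ℝ (fun z => K z y) x - fderiv ℝ (fun z => K z y) x'‖ ≤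
      C₀ * (‖x - x'‖ / ‖x - y‖) ^ δ * ‖x - y‖ ^ (α - n - 1)
  gradSizeAdj : ∀ x y : Pt n, x ≠ y →
    ‖fderiv ℝ (fun z => K x z) y‖ ≤ C₀ * ‖x - y‖ ^ (α - n - 1)
  gradHolderAdj : ∀ x y y' : Pt n, x ≠ y → ‖y - y'‖ ≤ ‖x - y‖ / 2 →
    ‖fderiv ℝ (fun z => K x z) y - fderiv ℝ (fun z => K x z) y'‖ ≤
      C₀ * (‖y - y'‖ / ‖x - y‖) ^ δ * ‖x - y‖ ^ (α - n - 1)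

/-- A (tangent line type) truncation of a CZ kernel: a bounded kernel, vanishing on the
diagonal, compactly supported, agreeing with `K` in the annulus `d ≤ |x-y| ≤ r`. -/
structure Truncation {n : ℕ} {α : ℝ} (K : CZKernel n α) : Type where
  Kt : Pt n → Pt n → ℝ
  d : ℝ
  r : ℝ
  dpos : 0 < d
  dlt : d < r
  bounded : ∃ M, ∀ x y, |Kt x y| ≤ M
  diag : ∀ x, Kt x x = 0
  agrees : ∀ x y : Pt n, d ≤ ‖x - y‖ → ‖x - y‖ ≤ r → Kt x y = K.K x y
  compactsupp : ∃ S, ∀ x y : Pt n, S ≤ ‖x - y‖ → Kt x y = 0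

/-- The truncated operator `T^α_μ f (x) = ∫ K_t(x,y) f(y) dμ(y)`. -/
def Truncation.op {n : ℕ} {α : ℝ} {K : CZKernel n α} (τ : Truncation K)
    (μ : Measure (Pt n)) (f : Pt n → ℝ) (x : Pt n) : ℝ := ∫ y, τ.Kt x y * f y ∂μ

/-- The truncated dual operator `(T^α)^*_μ g (x) = ∫ K_t(y,x) g(y) dμ(y)`. -/
def Truncation.opAdj {n : ℕ} {α : ℝ} {K : CZKernel n α} (τ : Truncation K)
    (μ : Measure (Pt n)) (g : Pt n → ℝ) (x : Pt n) : ℝ := ∫ y, τ.Kt y x * g y ∂μ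

/-- The two-weight norm constant `𝔑_{T^α}(σ,ω)`, uniform over all truncations. -/
def normConst {n : ℕ} {α : ℝ} (K : CZKernel n α) (σ ω : Measure (Pt n)) : ℝ≥0∞ :=
  sInf {N : ℝ≥0∞ | ∀ τ : Truncation K, ∀ f : Pt n → ℝ,
    ∫⁻ x, ENNReal.ofReal ((τ.op σ f x) ^ 2) ∂ω ≤ N ^ 2 * ∫⁻ x, ENNReal.ofReal ((f x) ^ 2) ∂σ}

/-- The (quasi)cube `Ω Q` associated to a cube `Q` and a globally biLipschitz map `Ω`;
for ordinary cubes take `Ω = id`. -/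
def qset {n : ℕ} (Om : Pt n → Pt n) (Q : Cube n) : Set (Pt n) := Om '' Q.set

/-- The (quasi)cube testing constant `𝔗_{T^α}(σ,ω)`, uniform over all truncations. -/
def testConst {n : ℕ} {α : ℝ} (Om : Pt n → Pt n) (K : CZKernel n α)
    (σ ω : Measure (Pt n)) : ℝ≥0∞ :=
  sInf {T : ℝ≥0∞ | ∀ τ : Truncation K, ∀ Q : Cube n,
    ∫⁻ x in qset Om Q, ENNReal.ofReal ((τ.op σ (indic (qset Om Q)) x) ^ 2) ∂ω ≤
      T ^ 2 * σ (qset Om Q)}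

/-- The dual (quasi)cube testing constant `𝔗^*_{T^α}(σ,ω)`. -/
def testConstDual {n : ℕ} {α : ℝ} (Om : Pt n → Pt n) (K : CZKernel n α)
    (σ ω : Measure (Pt n)) : ℝ≥0∞ :=
  sInf {T : ℝ≥0∞ | ∀ τ : Truncation K, ∀ Q : Cube n,
    ∫⁻ x in qset Om Q, ENNReal.ofReal ((τ.opAdj ω (indic (qset Om Q)) x) ^ 2) ∂σ ≤
      T ^ 2 * ω (qset Om Q)}

/-- The weak boundedness constant `𝒲ℬ𝒫_{T^α}(σ,ω)` with comparability constant `Cc`. -/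
def wbpConst {n : ℕ} {α : ℝ} (K : CZKernel n α) (Cc : ℝ) (σ ω : Measure (Pt n)) : ℝ≥0∞ :=
  sInf {W : ℝ≥0∞ | ∀ τ : Truncation K, ∀ Q Q' : Cube n, sideComp Cc Q Q' →
    (Q.set ⊆ Q'.tri.set \ Q'.set ∨ Q'.set ⊆ Q.tri.set \ Q.set) →
    ENNReal.ofReal |∫ x in Q.set, τ.op σ (indic Q'.set) x ∂ω| ≤
      W * (ω Q.set) ^ (1/2 : ℝ) * (σ Q'.set) ^ (1/2 : ℝ)}

/-- The indicator/touching constant `𝔍_{T^α}(σ,ω)` with comparability constant `Cc`. -/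
def indTouchConst {n : ℕ} {α : ℝ} (K : CZKernel n α) (Cc : ℝ) (σ ω : Measure (Pt n)) : ℝ≥0∞ :=
  sInf {Jc : ℝ≥0∞ | ∀ τ : Truncation K, ∀ Q Q' : Cube n, Touching Q Q' → sideComp Cc Q Q' →
    (Q.set ⊆ Q'.tri.set \ Q'.set ∨ Q'.set ⊆ Q.tri.set \ Q.set) →
    ENNReal.ofReal |∫ x in Q'.set, τ.op σ (indic Q.set) x ∂ω| ≤
      Jc * (σ Q.set) ^ (1/2 : ℝ) * (ω Q'.set) ^ (1/2 : ℝ)}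

/-- The reproducing Poisson integral `𝒫^α(ΩQ, μ)`. -/
def repPoisson {n : ℕ} (α : ℝ) (Om : Pt n → Pt n) (Q : Cube n) (μ : Measure (Pt n)) : ℝ≥0∞ :=
  ∫⁻ x, ENNReal.ofReal ((Q.l / (Q.l + ‖x - Om Q.center‖) ^ 2) ^ ((n : ℝ) - α)) ∂μ

/-- The standard Poisson integral `P^α(ΩQ, μ)`. -/
def stdPoisson {n : ℕ} (α : ℝ) (Om : Pt n → Pt n) (Q : Cube n) (μ : Measure (Pt n)) : ℝ≥0∞ :=
  ∫⁻ x, ENNReal.ofReal (Q.l / (Q.l + ‖x - Om Q.center‖) ^ ((n : ℝ) + 1 - α)) ∂μ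

/-- The one-tailed Muckenhoupt constant `𝒜₂^α(σ,ω)`. -/
def a2tail {n : ℕ} (α : ℝ) (Om : Pt n → Pt n) (σ ω : Measure (Pt n)) : ℝ≥0∞ :=
  ⨆ Q : Cube n, repPoisson α Om Q (σ.restrict (qset Om Q)ᶜ) * ω (qset Om Q) /
    ENNReal.ofReal (Q.l ^ ((n : ℝ) - α))

/-- The set of common point masses of `σ` and `ω`. -/
def commonAtoms {n : ℕ} (σ ω : Measure (Pt n)) : Set (Pt n) := {p | 0 < σ {p} ∧ 0 < ω {p}}

/-- The punctured mass `ω(Q, 𝔓_{(σ,ω)})`. -/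
def punctMass {n : ℕ} (σ ω : Measure (Pt n)) (Om : Pt n → Pt n) (Q : Cube n) : ℝ≥0∞ :=
  ω (qset Om Q) - ⨆ p ∈ qset Om Q ∩ commonAtoms σ ω, ω {p}

/-- The punctured Muckenhoupt constant `A₂^{α,punct}(σ,ω)`. -/
def a2punct {n : ℕ} (α : ℝ) (Om : Pt n → Pt n) (σ ω : Measure (Pt n)) : ℝ≥0∞ :=
  ⨆ Q : Cube n, (punctMass σ ω Om Q / ENNReal.ofReal (Q.l ^ ((n : ℝ) - α))) *
    (σ (qset Om Q) / ENNReal.ofReal (Q.l ^ ((n : ℝ) - α)))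

/-- The full Muckenhoupt constant `𝔄₂^α = 𝒜₂^α + 𝒜₂^{α,*} + A₂^{α,punct} + A₂^{α,*,punct}`. -/
def muckA2 {n : ℕ} (α : ℝ) (Om : Pt n → Pt n) (σ ω : Measure (Pt n)) : ℝ≥0∞ :=
  a2tail α Om σ ω + a2tail α Om ω σ + a2punct α Om σ ω + a2punct α Om ω σ

/-- The dyadic cube of the grid translated by `t`, of scale `k` and position `m`. -/
def dCube {n : ℕ} (t : Pt n) (k : ℤ) (m : Fin n → ℤ) : Cube n :=
  ⟨WithLp.toLp 2 (fun i => t i + (2:ℝ) ^ k * m i), (2:ℝ) ^ k, by positivity⟩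

/-- The dyadic grid with origin `t`. -/
def gridCubes {n : ℕ} (t : Pt n) : Set (Cube n) := {Q | ∃ k m, Q = dCube t k m}

/-- Alternate dyadic cubes: unions of `2ⁿ` grid cubes of half the side length. -/
def altCubes {n : ℕ} (t : Pt n) : Set (Cube n) :=
  {Q | ∃ (k : ℤ) (m : Fin n → ℤ), Q.l = (2:ℝ) ^ k ∧ ∀ i, Q.c i = t i + (2:ℝ) ^ (k - 1) * m i}

/-- The `μ`-average of `f` over `s`. -/
def cubeAvg {n : ℕ} (μ : Measure (Pt n)) (s : Set (Pt n)) (f : Pt n → ℝ) : ℝ :=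
  (∫ x in s, f x ∂μ) / (μ s).toReal

/-- The martingale (Haar) difference `Δ_Q^μ f`. -/
def haarDiff {n : ℕ} (μ : Measure (Pt n)) (Q : Cube n) (f : Pt n → ℝ) (x : Pt n) : ℝ :=
  ∑ e : Fin n → Bool,
    Set.indicator (Q.child e).set (fun _ => cubeAvg μ (Q.child e).set f - cubeAvg μ Q.set f) x

/-- `J` is `(r,ε)`-deeply embedded in `K`. -/
def deepEmb {n : ℕ} (r : ℕ) (ε : ℝ) (J K : Cube n) : Prop :=
  J.set ⊆ K.set ∧ (2:ℝ) ^ r * J.l ≤ K.l ∧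
    ENNReal.ofReal (J.l ^ ε * K.l ^ (1 - ε) / 2) ≤ sDistE J.set (frontier K.set)

/-- The maximal `(r,ε)`-deeply embedded dyadic subcubes of `K` from the grid `t`. -/
def maxDeep {n : ℕ} (r : ℕ) (ε : ℝ) (t : Pt n) (K : Cube n) : Set (Cube n) :=
  {J | J ∈ gridCubes t ∧ deepEmb r ε J K ∧
    ∀ J' ∈ gridCubes t, J.set ⊆ J'.set → deepEmb r ε J' K → J' = J}

/-- The grid children of a (possibly alternate) cube `K`. -/
def gridChildren {n : ℕ} (t : Pt n) (K : Cube n) : Set (Cube n) :=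
  {K' | K' ∈ gridCubes t ∧ K'.l = K.l / 2 ∧ K'.set ⊆ K.set}

/-- `P = π^ℓ K'` is the `ℓ`-fold grid ancestor of `K'`. -/
def gridAncestor {n : ℕ} (t : Pt n) (lev : ℕ) (K' P : Cube n) : Prop :=
  P ∈ gridCubes t ∧ P.l = (2:ℝ) ^ lev * K'.l ∧ K'.set ⊆ P.set

/-- The refinement `M^ℓ_{(r,ε)-deep,𝒟}(K)` of the maximal deeply embedded collection. -/
def maxDeepRef {n : ℕ} (r : ℕ) (ε : ℝ) (t : Pt n) (lev : ℕ) (K : Cube n) : Set (Cube n) :=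
  {J | (∃ K' ∈ gridChildren t K, ∃ P : Cube n, gridAncestor t lev K' P ∧ J ∈ maxDeep r ε t P) ∧
       ∃ L ∈ maxDeep r ε t K, J.set ⊆ L.set}

/-- The `ω`-average (barycenter) of the identity over the quasicube `Ω J`. -/
def cubeAvgVec {n : ℕ} (Om : Pt n → Pt n) (ω : Measure (Pt n)) (J : Cube n) : Pt n :=
  ((ω (qset Om J)).toReal)⁻¹ • ∫ x in qset Om J, x ∂ω

/-- The energy `‖P^ω_{ΩJ} x‖²_{L²(ω)} = ∫_{ΩJ} |x - E_{ΩJ}^ω x|² dω`. -/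
def energyTerm {n : ℕ} (Om : Pt n → Pt n) (ω : Measure (Pt n)) (J : Cube n) : ℝ≥0∞ :=
  ∫⁻ x in qset Om J, ENNReal.ofReal (‖x - cubeAvgVec Om ω J‖ ^ 2) ∂ω

/-- The energy sum `Σ_{J ∈ 𝒥} (P^α(J, 1_I σ)/ℓ(J))² ‖P_J^ω x‖²`. -/
def energySum {n : ℕ} (α : ℝ) (Om : Pt n → Pt n) (σ ω : Measure (Pt n)) (I : Cube n)
    (𝒥 : Set (Cube n)) : ℝ≥0∞ :=
  ∑' J : 𝒥, (stdPoisson α Om (J : Cube n) (σ.restrict (qset Om I)) /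
      ENNReal.ofReal ((J : Cube n).l)) ^ 2 * energyTerm Om ω (J : Cube n)

/-- `Ir` is a partition of `I` into dyadic subcubes from the grid `t`. -/
def isGridPartition {n : ℕ} (t : Pt n) (I : Cube n) (Ir : ℕ → Cube n) : Prop :=
  (∀ k, Ir k ∈ gridCubes t) ∧ (∀ k, (Ir k).set ⊆ I.set) ∧
  (∀ k k', k ≠ k' → Disjoint (Ir k).set (Ir k').set) ∧ (⋃ k, (Ir k).set) = I.set

/-- The strong energy constant `ℰ_α^{strong}(σ,ω)` with goodness parameters `r, ε`. -/
def strongEnergy {n : ℕ} (r : ℕ) (ε α : ℝ) (Om : Pt n → Pt n) (σ ω : Measure (Pt n)) : ℝ≥0∞ :=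
  sInf {E : ℝ≥0∞ |
    (∀ (t : Pt n) (I : Cube n), I ∈ gridCubes t → ∀ Ir : ℕ → Cube n, isGridPartition t I Ir →
      (∑' k : ℕ, energySum α Om σ ω I (maxDeep r ε t (Ir k))) ≤ E ^ 2 * σ (qset Om I)) ∧
    (∀ (t : Pt n) (I : Cube n), I ∈ altCubes t → ∀ lev : ℕ,
      energySum α Om σ ω I (maxDeepRef r ε t lev I) ≤ E ^ 2 * σ (qset Om I))}

/-- The translation `γ` of step `2^{-M}` indexed by `idx`. -/
def gamOf {n : ℕ} (M : ℕ) {Kc : ℕ} (idx : Fin n → Fin Kc) : Pt n :=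
  WithLp.toLp 2 (fun i => (idx i : ℝ) * (2:ℝ) ^ (-(M : ℤ)))

/-- The truncated dyadic grid built on `𝔻_M`, of size `2^{-N}`, translated by `γ`. -/
def truncGrid {n : ℕ} (M : ℕ) (N : ℤ) (γ : Pt n) : Set (Cube n) :=
  {Q | ∃ (k : ℤ) (m : Fin n → ℤ), -(M : ℤ) ≤ k ∧ k ≤ -N ∧ Q = dCube γ k m}

/-- The siblings of `Q`: the `3ⁿ` triadic children of `3Q`. -/
def siblings {n : ℕ} (Q : Cube n) : Set (Cube n) :=
  {Q' | ∃ a : Fin n → Fin 3, Q'.l = Q.l ∧ ∀ i, Q'.c i = Q.c i + ((a i : ℝ) - 1) * Q.l}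

/-- A grid `𝒟` is `Q`-good for the goodness parameters `r, ε`. -/
def QGoodGrid {n : ℕ} (r : ℕ) (ε : ℝ) (Q : Cube n) (𝒟 : Set (Cube n)) : Prop :=
  ∀ Q' ∈ siblings Q, ∀ I ∈ 𝒟, (2:ℝ) ^ r * Q.l ≤ I.l →
    ENNReal.ofReal (Q'.l ^ ε * I.l ^ (1 - ε) / 2) ≤ sDistE Q'.set (frontier I.set)

/-- A cube `I` is `r`-good in the grid `𝒟`. -/
def rGoodIn {n : ℕ} (r : ℕ) (ε : ℝ) (I : Cube n) (𝒟 : Set (Cube n)) : Prop :=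
  ∀ K ∈ 𝒟, (2:ℝ) ^ r * I.l ≤ K.l →
    ENNReal.ofReal (I.l ^ ε * K.l ^ (1 - ε) / 2) ≤ sDistE I.set (frontier K.set)

/-- The good projection `P^μ_{Q;good} f` relative to the grid `𝒟`. -/
def projGood {n : ℕ} (r : ℕ) (ε : ℝ) (Q : Cube n) (𝒟 : Set (Cube n)) (μ : Measure (Pt n))
    (f : Pt n → ℝ) (x : Pt n) : ℝ :=
  if QGoodGrid r ε Q 𝒟 then
    ∑' I : {I : Cube n // I ∈ 𝒟 ∧ rGoodIn r ε I 𝒟}, haarDiff μ (I : Cube n) f x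
  else 0

/-- The bad projection `P^μ_{Q;bad} f = f - P^μ_{Q;good} f`. -/
def projBad {n : ℕ} (r : ℕ) (ε : ℝ) (Q : Cube n) (𝒟 : Set (Cube n)) (μ : Measure (Pt n))
    (f : Pt n → ℝ) (x : Pt n) : ℝ := f x - projGood r ε Q 𝒟 μ f x

/-- An 'appropriate' function: supported in a cube `L` with mean zero, with `−N > ℓ(L) + r`,
and constant on the tiles of `𝔻_M`. -/
def Appropriate {n : ℕ} (μ : Measure (Pt n)) (M : ℕ) (N : ℤ) (r : ℕ) (f : Pt n → ℝ) : Prop :=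
  ∃ L : Cube n, (∀ x, x ∉ L.set → f x = 0) ∧ (∫ x in L.set, f x ∂μ) = 0 ∧
    L.l + (r : ℝ) < (-N : ℝ) ∧
    ∀ m : Fin n → ℤ, ∀ x ∈ (dCube 0 (-(M : ℤ)) m).set, ∀ y ∈ (dCube 0 (-(M : ℤ)) m).set, f x = f y

/-- Pairs `(I,J)` of grid cubes with `J ⊂ 3I` and `ρ`-comparable side lengths. -/
def pairsNear {n : ℕ} (t : Pt n) (ρ : ℕ) : Set (Cube n × Cube n) :=
  {p | p.1 ∈ gridCubes t ∧ p.2 ∈ gridCubes t ∧ p.2.set ⊆ p.1.tri.set ∧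
       (2:ℝ) ^ (-(ρ:ℤ)) * p.1.l ≤ p.2.l ∧ p.2.l ≤ (2:ℝ) ^ (ρ:ℤ) * p.1.l}

/-- Pairs `(I,J)` of grid cubes with `I ⊂ 3J` and `ρ`-comparable side lengths. -/
def pairsNear' {n : ℕ} (t : Pt n) (ρ : ℕ) : Set (Cube n × Cube n) :=
  {p | p.1 ∈ gridCubes t ∧ p.2 ∈ gridCubes t ∧ p.1.set ⊆ p.2.tri.set ∧
       (2:ℝ) ^ (-(ρ:ℤ)) * p.1.l ≤ p.2.l ∧ p.2.l ≤ (2:ℝ) ^ (ρ:ℤ) * p.1.l}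

/-- The inner product `⟨T^α_σ Δ_I^σ f, Δ_J^ω g⟩_ω`. -/
def innerTT {n : ℕ} {α : ℝ} {K : CZKernel n α} (τ : Truncation K) (σ ω : Measure (Pt n))
    (I J : Cube n) (f g : Pt n → ℝ) : ℝ :=
  ∫ x, τ.op σ (haarDiff σ I f) x * haarDiff ω J g x ∂ω

/-- The form `A₁(f,g)`, summing over comparable nearby pairs with `J ⊂ 3I`. -/
def formA1 {n : ℕ} {α : ℝ} {K : CZKernel n α} (τ : Truncation K) (σ ω : Measure (Pt n))
    (t : Pt n) (ρ : ℕ) (f g : Pt n → ℝ) : ℝ :=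
  ∑' p : pairsNear t ρ, innerTT τ σ ω p.1.1 p.1.2 f g

/-- The form `A₂(f,g)`, summing over comparable nearby pairs with `I ⊂ 3J`. -/
def formA2 {n : ℕ} {α : ℝ} {K : CZKernel n α} (τ : Truncation K) (σ ω : Measure (Pt n))
    (t : Pt n) (ρ : ℕ) (f g : Pt n → ℝ) : ℝ :=
  ∑' p : pairsNear' t ρ, innerTT τ σ ω p.1.1 p.1.2 f g

/-- `I` and `J` are `r`-close in the grid `t`: comparable side lengths, touching,
and one contained in the triple of the other. -/
def rClosePairs {n : ℕ} (t : Pt n) (r : ℕ) : Set (Cube n × Cube n) :=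
  {p | p.1 ∈ gridCubes t ∧ p.2 ∈ gridCubes t ∧
       (2:ℝ) ^ (-(r:ℤ)) * p.1.l ≤ p.2.l ∧ p.2.l ≤ (2:ℝ) ^ (r:ℤ) * p.1.l ∧
       Touching p.1 p.2 ∧ (p.1.set ⊆ p.2.tri.set ∨ p.2.set ⊆ p.1.tri.set)}

/-- The bilinear form `ℬ(f,g) = ⟨T_σ^α f, g⟩_ω`. -/
def formB {n : ℕ} {α : ℝ} {K : CZKernel n α} (τ : Truncation K) (σ ω : Measure (Pt n))
    (f g : Pt n → ℝ) : ℝ := ∫ x, τ.op σ f x * g x ∂ω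

/-- The bilinear form `𝒞_𝒟(f,g)`, summing over `r`-close pairs in the grid. -/
def formC {n : ℕ} {α : ℝ} {K : CZKernel n α} (τ : Truncation K) (σ ω : Measure (Pt n))
    (t : Pt n) (r : ℕ) (f g : Pt n → ℝ) : ℝ :=
  ∑' p : rClosePairs t r, innerTT τ σ ω p.1.1 p.1.2 f g

/-- The subbilinear form `𝒮_𝒟(f,g)`, summing absolute values over `r`-close pairs. -/
def formS {n : ℕ} {α : ℝ} {K : CZKernel n α} (τ : Truncation K) (σ ω : Measure (Pt n))
    (t : Pt n) (r : ℕ) (f g : Pt n → ℝ) : ℝ≥0∞ :=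
  ∑' p : rClosePairs t r, ENNReal.ofReal |innerTT τ σ ω p.1.1 p.1.2 f g|

/-- Two cubes are `ρ`-close: `ρ`-comparable side lengths, in a common grid, touching, and
one contained in the triple of the other. -/
def rhoClose {n : ℕ} (ρ : ℕ) (Q R : Cube n) : Prop :=
  (2:ℝ) ^ (-(ρ:ℤ)) * Q.l ≤ R.l ∧ R.l ≤ (2:ℝ) ^ (ρ:ℤ) * Q.l ∧
  (∃ t : Pt n, Q ∈ gridCubes t ∧ R ∈ gridCubes t) ∧
  Touching Q R ∧ (Q.set ⊆ R.tri.set ∨ R.set ⊆ Q.tri.set)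
/-- A point of a cube outside its `λ`-interior has a coordinate within `λ ℓ(Q)` of a face. -/
lemma Cube.exists_coord_near_face {n : ℕ} (hn : 0 < n) (Q : Cube n) {lam : ℝ} {x : Pt n}
    (hx : x ∈ Q.set) (hin : x ∉ Q.inn lam) :
    ∃ i, (Q.c i ≤ x i ∧ x i ≤ Q.c i + lam * Q.l) ∨
      (Q.c i + Q.l - lam * Q.l ≤ x i ∧ x i ≤ Q.c i + Q.l) := by
  have hne : (frontier Q.set).Nonempty := by
    rw [nonempty_frontier_iff]
    refine ⟨⟨x, hx⟩, fun h => ?_⟩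
    have hmem : WithLp.toLp 2 (fun i => Q.c i + Q.l) ∈ Q.set := h ▸ mem_univ _
    exact absurd (hmem ⟨0, hn⟩).2 (lt_irrefl _)
  obtain ⟨y, hy, hdist⟩ := isClosed_frontier.exists_infDist_eq_dist hne x
  have hle : dist x y ≤ lam * Q.l := by
    rw [← hdist]
    by_contra! h
    exact hin ⟨hx, h⟩
  have hopen : IsOpen {z : Pt n | ∀ i, Q.c i < z i ∧ z i < Q.c i + Q.l} := by
    simp only [ofPred_forall]
    refine isOpen_iInter_of_finite fun i => ?_
    have hc : Continuous fun z : Pt n => z i := by fun_prop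
    exact (isOpen_lt continuous_const hc).inter (isOpen_lt hc continuous_const)
  have hsub : {z : Pt n | ∀ i, Q.c i < z i ∧ z i < Q.c i + Q.l} ⊆ interior Q.set :=
    interior_maximal (fun z hz i => ⟨(hz i).1.le, (hz i).2⟩) hopen
  have hynot : ¬ ∀ i, Q.c i < y i ∧ y i < Q.c i + Q.l := fun h => hy.2 (hsub h)
  push Not at hynot
  obtain ⟨i, hi⟩ := hynot
  have hcoord : |x i - y i| ≤ lam * Q.l := by
    refine le_trans ?_ hle
    rw [dist_eq_norm, ← Real.norm_eq_abs]
    exact PiLp.norm_apply_le (x - y) i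
  have hxi := hx i
  rw [abs_le] at hcoord
  refine ⟨i, ?_⟩
  by_cases hc : Q.c i < y i
  · exact Or.inr ⟨by linarith [hi hc], hxi.2.le⟩
  · exact Or.inl ⟨hxi.1, by linarith⟩

/-- An interval of length `L ≥ h` contains at most `2 L / h` multiples of `h`. -/
lemma card_multiples_in_interval_le {K : ℕ} {h L : ℝ} (hh : 0 < h) (hL : h ≤ L) (a : ℝ) :
    ((Finset.univ.filter fun k : Fin K => a ≤ (k : ℝ) * h ∧ (k : ℝ) * h ≤ a + L).card : ℝ)
      ≤ 2 * (L / h) := by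
  have hcard : (Finset.univ.filter fun k : Fin K => a ≤ (k : ℝ) * h ∧ (k : ℝ) * h ≤ a + L).card
      ≤ (Finset.Icc ⌈a / h⌉ ⌊(a + L) / h⌋).card := by
    refine Finset.card_le_card_of_injOn (fun k : Fin K => ((k : ℕ) : ℤ)) ?_ ?_
    · intro k hk
      simp only [Finset.coe_filter, Finset.mem_univ, true_and, mem_ofPred_eq] at hk
      simp only [Finset.coe_Icc, mem_Icc, Int.ceil_le, Int.le_floor, Int.cast_natCast]
      exact ⟨(div_le_iff₀ hh).2 hk.1, (le_div_iff₀ hh).2 hk.2⟩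
    · intro k _ k' _ hkk
      exact Fin.ext (Int.ofNat_inj.1 hkk)
  have hone : 1 ≤ L / h := (one_le_div hh).2 hL
  rw [Int.card_Icc] at hcard
  have hcast : (((⌊(a + L) / h⌋ + 1 - ⌈a / h⌉).toNat : ℤ) : ℝ) ≤ 2 * (L / h) := by
    rw [Int.toNat_eq_max]
    push_cast
    refine max_le ?_ (by linarith)
    have h1 := Int.floor_le ((a + L) / h)
    have h2 := Int.le_ceil (a / h)
    rw [add_div] at h1
    rw [add_div]
    linarith
  refine le_trans ?_ hcast
  exact_mod_cast hcard

/-- Union bound for tuples having a coordinate that satisfies a rare predicate. -/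
lemma card_exists_coord_le {n K : ℕ} (P : Fin n → Fin K → Prop) {B : ℝ}
    (hB : ∀ i, ((Finset.univ.filter (P i)).card : ℝ) ≤ B * K) :
    ((Finset.univ.filter fun idx : Fin n → Fin K => ∃ i, P i (idx i)).card : ℝ)
      ≤ n * B * (K : ℝ) ^ n := by
  have hone : ∀ i, ((Finset.univ.filter fun idx : Fin n → Fin K => P i (idx i)).card : ℝ)
      ≤ B * (K : ℝ) ^ n := by
    intro i
    have heq : (Finset.univ.filter fun idx : Fin n → Fin K => P i (idx i)) =
        Fintype.piFinset (Function.update (fun _ => Finset.univ) i (Finset.univ.filter (P i))) := by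
      ext idx
      simp only [Finset.mem_filter, Finset.mem_univ, true_and, Fintype.mem_piFinset]
      constructor
      · intro h j
        by_cases hj : j = i
        · subst hj
          simpa using h
        · simp [hj]
      · intro h
        simpa using h i
    have hcard : (Finset.univ.filter fun idx : Fin n → Fin K => P i (idx i)).card =
        (Finset.univ.filter (P i)).card * K ^ (n - 1) := by
      rw [heq, Fintype.card_piFinset, ← Finset.mul_prod_erase _ _ (Finset.mem_univ i)]
      rw [Finset.prod_congr rfl (g := fun _ => K) fun j hj => by
        simp [Finset.ne_of_mem_erase hj]]
      simp
    have hn : n - 1 + 1 = n := Nat.sub_add_cancel i.pos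
    rw [hcard]
    push_cast
    calc _ ≤ B * K * (K : ℝ) ^ (n - 1) := by gcongr; exact hB i
      _ = B * (K : ℝ) ^ (n - 1 + 1) := by ring
      _ = _ := by rw [hn]
  have hsub : (Finset.univ.filter fun idx : Fin n → Fin K => ∃ i, P i (idx i)) ⊆
      Finset.univ.biUnion fun i => Finset.univ.filter fun idx : Fin n → Fin K => P i (idx i) := by
    intro idx
    simp
  calc ((Finset.univ.filter fun idx : Fin n → Fin K => ∃ i, P i (idx i)).card : ℝ)
      ≤ ∑ i, ((Finset.univ.filter fun idx : Fin n → Fin K => P i (idx i)).card : ℝ) := by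
        exact_mod_cast (Finset.card_le_card hsub).trans Finset.card_biUnion_le
    _ ≤ ∑ _i : Fin n, B * (K : ℝ) ^ n := Finset.sum_le_sum fun i _ => hone i
    _ = _ := by simp; ring

/-- If every point lies in at most `D` sets of a finite measurable family, then the sum of the
masses of their traces on a set `A` is at most `D μ(A)`. -/
lemma sum_measure_inter_le {α ι : Type*} [MeasurableSpace α] [Fintype ι] (μ : Measure α)
    (A : Set α) (T : ι → Set α) (hT : ∀ i, MeasurableSet (T i)) {D : ℝ}
    (hD : ∀ x, ((Finset.univ.filter fun i => x ∈ T i).card : ℝ) ≤ D) :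
    ∑ i, μ (A ∩ T i) ≤ ENNReal.ofReal D * μ A := by
  calc ∑ i, μ (A ∩ T i) = ∑ i, ∫⁻ x in A, (T i).indicator 1 x ∂μ := by
        refine Finset.sum_congr rfl fun i _ => ?_
        rw [lintegral_indicator_one (hT i), Measure.restrict_apply (hT i), inter_comm]
    _ = ∫⁻ x in A, ∑ i, (T i).indicator 1 x ∂μ :=
        (lintegral_finsetSum _ fun i _ => measurable_one.indicator (hT i)).symm
    _ ≤ ∫⁻ _x in A, ENNReal.ofReal D ∂μ := by
        refine lintegral_mono fun x => ?_
        have hcount : ∑ i, (T i).indicator (1 : α → ℝ≥0∞) x =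
            ((Finset.univ.filter fun i => x ∈ T i).card : ℝ≥0∞) := by
          simp [indicator_apply]
        rw [hcount, ← ENNReal.ofReal_natCast]
        exact ENNReal.ofReal_le_ofReal (hD x)
    _ = _ := by simp

/-- **Averaged thinness of boundary shells.** Let `ω` be locally finite, `R, J` cubes with
`2^{-ρ}ℓ(R) ≤ ℓ(J) ≤ 2^{ρ}ℓ(R)` and `J ⊂ 3R`, `λ ∈ (0,1/2)`, and `J'` a dyadic child of `J`.
Averaging over the translation parameterization of dyadic grids (translations of step `2^{-M}`
bounded by `2^{-N}`),
`𝔼_Ω ω(R ∩ [(J+γ)' ∖ (J+γ)_λ]) ≤ C_ρ λ ω(R)`, where `C_ρ` depends only on `n` and `ρ`. -/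
theorem averagedShellThinness (n ρ : ℕ) (hn : 0 < n) :
    ∃ C : ℝ, 0 < C ∧
      ∀ ω : Measure (Pt n), IsLocallyFiniteMeasure ω →
      ∀ R J : Cube n, (2:ℝ) ^ (-(ρ:ℤ)) * R.l ≤ J.l → J.l ≤ (2:ℝ) ^ (ρ:ℤ) * R.l →
      J.set ⊆ R.tri.set →
      ∀ lam : ℝ, 0 < lam → lam < 1/2 →
      ∀ e : Fin n → Bool,
      ∀ (M : ℕ) (N : ℤ), N < 0 →
      (2:ℝ) ^ (-(M:ℤ)) ≤ lam * J.l → R.l ≤ (2:ℝ) ^ (-N) →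
      (∑ idx : Fin n → Fin (2 ^ ((M - N).toNat)),
            ω (R.set ∩ (((J.trans (gamOf M idx)).child e).set \ (J.trans (gamOf M idx)).inn lam))) /
          (Fintype.card (Fin n → Fin (2 ^ ((M - N).toNat))) : ℝ≥0∞)
        ≤ ENNReal.ofReal (C * lam) * ω R.set := by
  refine ⟨n * (4 * 2 ^ ρ), by positivity, ?_⟩
  intro ω _ R J _ hJR _ lam hlam _ e M N hN hM hRN
  set K : ℕ := 2 ^ ((M - N).toNat) with hK
  set h : ℝ := (2:ℝ) ^ (-(M:ℤ)) with hh
  have hpos : 0 < h := by positivity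
  have hKh : (K : ℝ) * h = (2:ℝ) ^ (-N) := by
    have hcast : (K : ℝ) = (2:ℝ) ^ ((M : ℤ) - N) := by
      rw [hK, Nat.cast_pow, ← zpow_natCast, Int.toNat_of_nonneg (by omega), Nat.cast_ofNat]
    rw [hcast, hh, ← zpow_add₀ two_ne_zero]
    congr 1
    ring
  have hratio : lam * J.l / h ≤ lam * 2 ^ ρ * K := by
    rw [div_le_iff₀ hpos, mul_assoc (lam * 2 ^ ρ), hKh, mul_assoc]
    rw [zpow_natCast] at hJR
    gcongr
    exact hJR.trans (by gcongr)
  set P : Pt n → Fin n → Fin K → Prop := fun x i k =>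
    (J.c i + k * h ≤ x i ∧ x i ≤ J.c i + k * h + lam * J.l) ∨
      (J.c i + k * h + J.l - lam * J.l ≤ x i ∧ x i ≤ J.c i + k * h + J.l) with hP
  set T : (Fin n → Fin K) → Set (Pt n) := fun idx => {x | ∃ i, P x i (idx i)} with hT
  have hTmeas : ∀ idx, MeasurableSet (T idx) := by
    intro idx
    simp only [hT, hP, ofPred_exists]
    refine MeasurableSet.iUnion fun i => IsClosed.measurableSet ?_
    have hc : Continuous fun x : Pt n => x i := by fun_prop
    exact ((isClosed_le continuous_const hc).inter (isClosed_le hc continuous_const)).union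
      ((isClosed_le continuous_const hc).inter (isClosed_le hc continuous_const))
  have hPcard : ∀ x i, ((Finset.univ.filter (P x i)).card : ℝ) ≤ 4 * 2 ^ ρ * lam * K := by
    intro x i
    have hsub : Finset.univ.filter (P x i) ⊆
        (Finset.univ.filter fun k : Fin K => x i - J.c i - lam * J.l ≤ (k : ℝ) * h ∧
          (k : ℝ) * h ≤ x i - J.c i - lam * J.l + lam * J.l) ∪
        (Finset.univ.filter fun k : Fin K => x i - J.c i - J.l ≤ (k : ℝ) * h ∧
          (k : ℝ) * h ≤ x i - J.c i - J.l + lam * J.l) := by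
      intro k hk
      simp only [hP, Finset.mem_filter, Finset.mem_univ, true_and, Finset.mem_union] at hk ⊢
      rcases hk with hk | hk
      · exact Or.inl ⟨by linarith, by linarith⟩
      · exact Or.inr ⟨by linarith, by linarith⟩
    have hunion := (Nat.cast_le (α := ℝ)).2
      ((Finset.card_le_card hsub).trans (Finset.card_union_le _ _))
    push_cast at hunion
    have h1 := card_multiples_in_interval_le (K := K) hpos hM (x i - J.c i - lam * J.l)
    have h2 := card_multiples_in_interval_le (K := K) hpos hM (x i - J.c i - J.l)
    linarith
  have hsub : ∀ idx : Fin n → Fin K,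
      ((J.trans (gamOf M idx)).child e).set \ (J.trans (gamOf M idx)).inn lam ⊆ T idx := by
    intro idx x hx
    have hl := J.lpos
    refine (J.trans (gamOf M idx)).exists_coord_near_face hn (fun i => ?_) hx.2
    have hi := hx.1 i
    simp only [Cube.child, Cube.trans] at hi ⊢
    split_ifs at hi <;> constructor <;> linarith [hi.1, hi.2]
  have hsum := sum_measure_inter_le ω R.set T hTmeas (D := n * (4 * 2 ^ ρ * lam) * (K : ℝ) ^ n)
    fun x => by
      convert card_exists_coord_le (P x) (B := 4 * 2 ^ ρ * lam) (fun i => by convert hPcard x i)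
      exact mem_ofPred_eq.to_iff
  refine ENNReal.div_le_of_le_mul ?_
  calc _ ≤ ∑ idx, ω (R.set ∩ T idx) :=
        Finset.sum_le_sum fun idx _ => measure_mono (inter_subset_inter_right _ (hsub idx))
    _ ≤ _ := hsum
    _ = _ := by
      rw [show (n : ℝ) * (4 * 2 ^ ρ * lam) * (K : ℝ) ^ n =
        n * (4 * 2 ^ ρ) * lam * ((K ^ n : ℕ) : ℝ) by push_cast; ring,
        ENNReal.ofReal_mul (by positivity), ENNReal.ofReal_natCast]
      simp only [Fintype.card_fun, Fintype.card_fin]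
      ring
end
end

section
/- Key surgery estimate: Let ω be a locally finite positive Borel measure on ℝⁿ, let J and R be cubes that are ρ-close (comparable side lengths 2^{−ρ}ℓ(R) ≤ ℓ(J) ≤ 2^{ρ}ℓ(R), in a common grid, touching, with J ⊂ 3R or R ⊂ 3J), let J′ be a dyadic child of J, and let λ ∈ (0,1/2). Then, averaging over the translation parameterization of dyadic grids, 𝔼_Ω ∫_{(J+γ)′ ∖ (J+γ)_λ} |Δ_{J+γ}^ω 1_R|² dω ≤ C √λ ω(R), where C depends only on n and ρ. -/
open MeasureTheory Set Filter Topology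
open scoped ENNReal NNReal Classical

noncomputable section

lemma sum_mul_sq_div_add_sum_le (a : ℕ → ℝ) (ha : ∀ m, 0 ≤ a m) {r : ℝ} (hr : 0 < r) (n : ℕ) :
    ∑ m ∈ Finset.range n, a m * (r / (r + ∑ j ∈ Finset.range (m + 1), a j)) ^ 2
      + r ^ 2 / (r + ∑ j ∈ Finset.range n, a j) ≤ r := by
  induction n with
  | zero => simp [pow_two, hr.ne']
  | succ n ih =>
    refine le_trans ?_ ih
    rw [Finset.sum_range_succ, Finset.sum_range_succ a n, add_assoc]
    gcongr
    have hG : 0 ≤ ∑ j ∈ Finset.range n, a j := Finset.sum_nonneg fun j _ => ha j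
    generalize ∑ j ∈ Finset.range n, a j = G at hG
    have han := ha n
    generalize a n = b at han
    have hX : 0 < r + G := by positivity
    have hY : 0 < r + (G + b) := by positivity
    rw [div_pow, ← mul_div_assoc, div_add_div _ _ (by positivity) hY.ne',
      div_le_div_iff₀ (by positivity) hX]
    have : r ^ 2 * ((r + (G + b)) ^ 2 * (r + (G + b)))
        - (b * r ^ 2 * (r + (G + b)) + (r + (G + b)) ^ 2 * r ^ 2) * (r + G)
        = r ^ 2 * b ^ 2 * (r + (G + b)) := by ring
    have h2 : 0 ≤ r ^ 2 * b ^ 2 * (r + (G + b)) := by positivity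
    linarith

lemma sum_measureReal_inter_le {α : Type*} [MeasurableSpace α] (μ : Measure α) (S : ℕ → Set α)
    (hS : ∀ k, MeasurableSet (S k)) (D : Set α) (hDf : μ D ≠ ∞) (s : Finset ℕ) (q : ℕ)
    (hq : ∀ x, (s.filter fun k => x ∈ S k).card ≤ q) :
    ∑ k ∈ s, μ.real (S k ∩ D) ≤ q * μ.real D := by
  have key : ∑ k ∈ s, μ (S k ∩ D) ≤ q * μ D := by
    calc ∑ k ∈ s, μ (S k ∩ D) = ∑ k ∈ s, ∫⁻ x in D, (S k).indicator 1 x ∂μ := by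
          refine Finset.sum_congr rfl fun k _ => ?_
          rw [lintegral_indicator_one (hS k), Measure.restrict_apply (hS k)]
      _ = ∫⁻ x in D, ∑ k ∈ s, (S k).indicator 1 x ∂μ := by
          rw [lintegral_finsetSum]
          exact fun k _ => measurable_one.indicator (hS k)
      _ ≤ ∫⁻ x in D, (q : ℝ≥0∞) ∂μ := by
          refine lintegral_mono fun x => ?_
          have : ∑ k ∈ s, (S k).indicator (1 : α → ℝ≥0∞) x
              = ((s.filter fun k => x ∈ S k).card : ℝ≥0∞) := by
            simp [Set.indicator_apply]
          rw [this]
          exact Nat.cast_le.2 (hq x)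
      _ = q * μ D := by simp
  have hfin : ∀ k ∈ s, μ (S k ∩ D) ≠ ∞ := fun k _ => measure_ne_top_of_subset inter_subset_right hDf
  have := ENNReal.toReal_mono (ENNReal.mul_ne_top (by simp) hDf) key
  rw [ENNReal.toReal_sum hfin] at this
  simpa [Measure.real] using this

lemma sum_measureReal_mul_sq_le {α : Type*} [MeasurableSpace α] (μ : Measure α) (S : ℕ → Set α)
    (hS : ∀ k, MeasurableSet (S k)) (hSf : ∀ k, μ (S k) ≠ ∞) (W q : ℕ) {r : ℝ} (hr : 0 < r)
    (V : ℕ → ℝ) (hV : ∀ k < W, μ.real (⋃ m ∈ Finset.range (k + 1), S m) ≤ V k)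
    (hq : ∀ x, ((Finset.range W).filter fun k => x ∈ S k).card ≤ q) :
    ∑ k ∈ Finset.range W, μ.real (S k) * (r / (r + V k)) ^ 2 ≤ q * r := by
  have hD : ∀ m, MeasurableSet (disjointed S m) := fun m => MeasurableSet.disjointed hS m
  have hDf : ∀ m, μ (disjointed S m) ≠ ∞ := fun m =>
    measure_ne_top_of_subset (disjointed_subset S m) (hSf m)
  have hpd : ∀ t : Set ℕ, t.PairwiseDisjoint (disjointed S) := fun t =>
    (disjoint_disjointed S).set_pairwise t
  set G : ℕ → ℝ := fun m => ∑ j ∈ Finset.range (m + 1), μ.real (disjointed S j) with hGdef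
  have hG0 : ∀ m, 0 ≤ G m := fun m => Finset.sum_nonneg fun j _ => measureReal_nonneg
  have hGmono : Monotone G := fun m k hmk => Finset.sum_le_sum_of_subset_of_nonneg
    (Finset.range_mono (by omega)) fun _ _ _ => measureReal_nonneg
  have hcover : ∀ k, (⋃ m ∈ Finset.range (k + 1), disjointed S m)
      = ⋃ m ∈ Finset.range (k + 1), S m := by
    intro k
    have := biUnion_range_succ_disjointed S k
    rw [partialSups_eq_biSup] at this
    simpa using this
  have hGV : ∀ k < W, G k ≤ V k := by
    intro k hk
    rw [hGdef]
    simp only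
    rw [← measureReal_biUnion_finset (hpd _) (fun m _ => hD m) (fun m _ => hDf m), hcover]
    exact hV k hk
  have hsplit : ∀ k, μ.real (S k) ≤ ∑ m ∈ Finset.range (k + 1), μ.real (S k ∩ disjointed S m) := by
    intro k
    rw [← measureReal_biUnion_finset _ (fun m _ => (hS k).inter (hD m))
      (fun m _ => measure_ne_top_of_subset inter_subset_left (hSf k)), ← inter_iUnion₂, hcover]
    · refine measureReal_mono (fun x hx => ⟨hx, ?_⟩)
        (measure_ne_top_of_subset inter_subset_left (hSf k))
      exact mem_biUnion (Finset.mem_coe.2 (Finset.self_mem_range_succ k)) hx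
    · exact fun a ha b hb hab => (hpd _ ha hb hab).mono inter_subset_right inter_subset_right
  calc ∑ k ∈ Finset.range W, μ.real (S k) * (r / (r + V k)) ^ 2
      ≤ ∑ k ∈ Finset.range W, ∑ m ∈ Finset.range W,
          μ.real (S k ∩ disjointed S m) * (r / (r + G m)) ^ 2 := by
        refine Finset.sum_le_sum fun k hk => ?_
        have hkW := Finset.mem_range.1 hk
        calc μ.real (S k) * (r / (r + V k)) ^ 2
            ≤ (∑ m ∈ Finset.range (k + 1), μ.real (S k ∩ disjointed S m))
              * (r / (r + V k)) ^ 2 := by gcongr; exact hsplit k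
          _ ≤ ∑ m ∈ Finset.range (k + 1),
              μ.real (S k ∩ disjointed S m) * (r / (r + G m)) ^ 2 := by
            rw [Finset.sum_mul]
            refine Finset.sum_le_sum fun m hm => ?_
            have h1 : G m ≤ V k := (hGmono (by simpa [Nat.lt_succ_iff] using hm)).trans (hGV k hkW)
            have h2 := hG0 m
            have : 0 ≤ r + V k := by linarith
            gcongr
          _ ≤ _ := Finset.sum_le_sum_of_subset_of_nonneg (Finset.range_mono (by omega))
              fun _ _ _ => by positivity
    _ = ∑ m ∈ Finset.range W, (∑ k ∈ Finset.range W, μ.real (S k ∩ disjointed S m))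
          * (r / (r + G m)) ^ 2 := by
        rw [Finset.sum_comm]
        simp_rw [Finset.sum_mul]
    _ ≤ ∑ m ∈ Finset.range W, (q * μ.real (disjointed S m)) * (r / (r + G m)) ^ 2 := by
        gcongr with m hm
        exact sum_measureReal_inter_le μ S hS _ (hDf m) _ q hq
    _ = q * ∑ m ∈ Finset.range W, μ.real (disjointed S m) * (r / (r + G m)) ^ 2 := by
        rw [Finset.mul_sum]; simp_rw [mul_assoc]
    _ ≤ q * r := by
        gcongr
        have := sum_mul_sq_div_add_sum_le (fun m => μ.real (disjointed S m))
          (fun m => measureReal_nonneg) hr W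
        refine le_trans (le_add_of_nonneg_right ?_) this
        have : 0 ≤ ∑ j ∈ Finset.range W, μ.real (disjointed S j) :=
          Finset.sum_nonneg fun j _ => measureReal_nonneg
        positivity

lemma card_le_of_forall_le_add (s : Finset ℕ) (D : ℕ) (h : ∀ k ∈ s, ∀ m ∈ s, m ≤ k + D) :
    s.card ≤ D + 1 := by
  rcases s.eq_empty_or_nonempty with rfl | hs
  · simp
  · have : s ⊆ Finset.Icc (s.min' hs) (s.min' hs + D) := fun m hm =>
      Finset.mem_Icc.2 ⟨s.min'_le m hm, h _ (s.min'_mem hs) m hm⟩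
    simpa using (Finset.card_le_card this).trans (by simp; omega)

lemma sum_range_le_of_window (f : ℕ → ℝ) (hf : ∀ k, 0 ≤ f k) (W T : ℕ) {B : ℝ} (hB : 0 ≤ B)
    (hwin : ∀ k₀, ∑ j ∈ Finset.range W, f (k₀ + j) ≤ B)
    (hsupp : ∀ k m, f k ≠ 0 → f m ≠ 0 → m < k + T * W) (K : ℕ) :
    ∑ k ∈ Finset.range K, f k ≤ T * B := by
  have hblock : ∀ k₀ T', ∑ j ∈ Finset.range (T' * W), f (k₀ + j) ≤ T' * B := by
    intro k₀ T'
    induction T' with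
    | zero => simp
    | succ T' ih =>
      rw [Nat.succ_mul, Finset.sum_range_add]
      have := hwin (k₀ + T' * W)
      simp only [add_assoc] at this
      push_cast
      linarith
  by_cases hex : ∃ k, f k ≠ 0
  · refine le_trans ?_ (hblock (Nat.find hex) T)
    rw [← Finset.sum_filter_ne_zero (Finset.range K)]
    have : ∑ j ∈ Finset.range (T * W), f (Nat.find hex + j)
        = ∑ j ∈ (Finset.range (T * W)).image (Nat.find hex + ·), f j := by
      rw [Finset.sum_image (by intro a _ b _; simp)]
    rw [this]
    refine Finset.sum_le_sum_of_subset_of_nonneg (fun k hk => ?_) fun k _ _ => hf k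
    have hk' := (Finset.mem_filter.1 hk).2
    have h1 := Nat.find_min' hex hk'
    have h2 := hsupp _ k (Nat.find_spec hex) hk'
    exact Finset.mem_image.2 ⟨k - Nat.find hex, Finset.mem_range.2 (by omega), by omega⟩
  · push Not at hex
    simp [hex]; positivity

lemma sum_measureReal_mul_sq_average_le {α : Type*} [MeasurableSpace α] (ω : Measure α)
    (A S : ℕ → Set α) (R : Set α) (hS : ∀ k, MeasurableSet (S k))
    (hR : MeasurableSet R) (hAf : ∀ k, ω (A k) ≠ ∞) (hRf : ω R ≠ ∞) (W q : ℕ)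
    (hSA : ∀ k, S k ⊆ A k) (hchain : ∀ k < W, ∀ m ≤ k, S m ⊆ A k)
    (hq : ∀ x, ((Finset.range W).filter fun k => x ∈ S k).card ≤ q) :
    ∑ k ∈ Finset.range W, ω.real (S k) * (ω.real (A k ∩ R) / ω.real (A k)) ^ 2
      ≤ 2 * (q * ω.real R) := by
  have hSf : ∀ k, ω (S k) ≠ ∞ := fun k => measure_ne_top_of_subset (hSA k) (hAf k)
  have hp : ∀ k, ω.real (A k ∩ R) ≤ ω.real R := fun k => measureReal_mono inter_subset_right hRf
  rcases (measureReal_nonneg (μ := ω) (s := R)).eq_or_lt with hr | hr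
  · have : ∀ k, ω.real (A k ∩ R) = 0 := fun k =>
      le_antisymm ((hp k).trans hr.symm.le) measureReal_nonneg
    simp [this, ← hr]
  have h1 : ∑ k ∈ Finset.range W, ω.real (S k ∩ R) ≤ q * ω.real R :=
    sum_measureReal_inter_le ω S hS R hRf _ q hq
  have hres : ∀ B, (ω.restrict Rᶜ).real B = ω.real (B \ R) := fun B => by
    rw [measureReal_restrict_apply' hR.compl, sdiff_eq]
  have h2 : ∑ k ∈ Finset.range W, (ω.restrict Rᶜ).real (S k)
      * (ω.real R / (ω.real R + ω.real (A k \ R))) ^ 2 ≤ q * ω.real R := by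
    refine sum_measureReal_mul_sq_le _ S hS (fun k => ?_) W q hr _ (fun k hk => ?_) hq
    · exact ((Measure.restrict_apply_le _ _).trans_lt (hSf k).lt_top).ne
    · rw [hres]
      refine measureReal_mono (sdiff_subset_sdiff_left ?_)
        (measure_ne_top_of_subset sdiff_subset (hAf k))
      exact iUnion₂_subset fun m hm => hchain k hk m (by simpa [Nat.lt_succ_iff] using hm)
  rw [two_mul]
  refine le_trans ?_ (add_le_add h1 h2)
  rw [← Finset.sum_add_distrib]
  refine Finset.sum_le_sum fun k _ => ?_
  rw [hres, ← measureReal_inter_add_sdiff (s := S k) hR (hSf k),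
    ← measureReal_inter_add_sdiff (s := A k) hR (hAf k), add_mul]
  have hV : 0 ≤ ω.real (A k \ R) := measureReal_nonneg
  have hp0 : 0 ≤ ω.real (A k ∩ R) := measureReal_nonneg
  have hpk := hp k
  generalize ω.real (A k \ R) = V at *
  generalize ω.real (A k ∩ R) = p at *
  have hle1 : p / (p + V) ≤ 1 := div_le_one_of_le₀ (by linarith) (by positivity)
  have hle2 : p / (p + V) ≤ ω.real R / (ω.real R + V) := by
    rcases hp0.eq_or_lt with rfl | hp0
    · simp; positivity
    · rw [div_le_div_iff₀ (by positivity) (by positivity)]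
      nlinarith
  gcongr
  exact mul_le_of_le_one_right measureReal_nonneg (pow_le_one₀ (by positivity) hle1)

lemma sum_slab_le {α : Type*} [MeasurableSpace α] (ω : Measure α) (u : α → ℝ) (P R : Set α)
    (A S : ℕ → Set α) (b : Bool) {c h l w a d : ℝ} (T : ℕ)
    (hS : ∀ k, MeasurableSet (S k)) (hR : MeasurableSet R) (hAf : ∀ k, ω (A k) ≠ ∞)
    (hRf : ω R ≠ ∞) (hh : 0 < h) (hhw : h ≤ w) (hwl : 4 * w ≤ l) (hT : 4 * d + 5 * l ≤ T * l)
    (hA : ∀ k x, x ∈ A k ↔ x ∈ P ∧ c + k * h ≤ u x ∧ u x < c + k * h + l)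
    (hSA : ∀ k x, x ∈ S k ↔ x ∈ A k ∧ if b then c + k * h + l - w ≤ u x else u x ≤ c + k * h + w)
    (hRu : ∀ x ∈ R, a ≤ u x ∧ u x < a + d) (K : ℕ) :
    ∑ k ∈ Finset.range K, ω.real (S k) * (ω.real (A k ∩ R) / ω.real (A k)) ^ 2
      ≤ T * (2 * ((⌊w / h⌋₊ + 1 : ℕ) * ω.real R)) := by
  have hSsub : ∀ k, S k ⊆ A k := fun k x hx => ((hSA k x).1 hx).1
  have hl : 0 < l := by linarith
  set W : ℕ := ⌊l / (2 * h)⌋₊ with hWdef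
  have hWle : W * h ≤ l / 2 := by
    have := Nat.floor_le (a := l / (2 * h)) (by positivity)
    rw [← hWdef, le_div_iff₀ (by positivity)] at this
    linarith
  have hWge : l / 4 ≤ W * h := by
    have := Nat.lt_floor_add_one (l / (2 * h))
    rw [← hWdef, div_lt_iff₀ (by positivity)] at this
    nlinarith
  have hclose : ∀ x k m, x ∈ S k → x ∈ S m → m ≤ k + ⌊w / h⌋₊ := by
    intro x k m hk hm
    obtain ⟨hk1, hk2⟩ := (hSA k x).1 hk
    obtain ⟨hm1, hm2⟩ := (hSA m x).1 hm
    obtain ⟨-, hk3, hk4⟩ := (hA k x).1 hk1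
    obtain ⟨-, hm3, hm4⟩ := (hA m x).1 hm1
    have hmk : ((m : ℝ) - k) * h ≤ w := by
      cases b <;> simp at hk2 hm2 <;> linarith
    by_contra! hlt
    have h1 : ⌊w / h⌋₊ + 1 ≤ m - k := by omega
    have h2 : ((⌊w / h⌋₊ : ℝ) + 1) ≤ (m : ℝ) - k := by
      rw [← Nat.cast_sub (by omega)]
      exact_mod_cast h1
    have h3 := Nat.lt_floor_add_one (w / h)
    rw [div_lt_iff₀ hh] at h3
    nlinarith
  refine sum_range_le_of_window _ (fun k => by positivity) W T (by positivity) (fun k₀ => ?_) ?_ K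
  · cases b with
    | true =>
      refine sum_measureReal_mul_sq_average_le ω (fun j => A (k₀ + j)) (fun j => S (k₀ + j)) R
        (fun k => hS _) hR (fun k => hAf _) hRf W _ (fun k => hSsub _) (fun k hk m hm x hx => ?_)
        (fun x => ?_)
      · obtain ⟨hx1, hx2⟩ := (hSA _ x).1 hx
        obtain ⟨hx3, hx4, hx5⟩ := (hA _ x).1 hx1
        simp only [if_true] at hx2
        have hkW : (k : ℝ) * h ≤ W * h := by gcongr
        have hmk : (m : ℝ) * h ≤ k * h := by gcongr
        have hm0 : 0 ≤ (m : ℝ) * h := by positivity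
        refine (hA _ x).2 ⟨hx3, ?_, ?_⟩ <;> push_cast at * <;> nlinarith
      · refine card_le_of_forall_le_add _ _ fun k hk m hm => ?_
        have := hclose x _ _ (Finset.mem_filter.1 hk).2 (Finset.mem_filter.1 hm).2
        omega
    | false =>
      rw [← Finset.sum_range_reflect]
      refine sum_measureReal_mul_sq_average_le ω (fun j => A (k₀ + (W - 1 - j)))
        (fun j => S (k₀ + (W - 1 - j))) R
        (fun k => hS _) hR (fun k => hAf _) hRf W _ (fun k => hSsub _) (fun k hk m hm x hx => ?_)
        (fun x => ?_)
      · obtain ⟨hx1, hx2⟩ := (hSA _ x).1 hx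
        obtain ⟨hx3, hx4, hx5⟩ := (hA _ x).1 hx1
        simp only [Bool.false_eq_true, if_false] at hx2
        have h1 : W - 1 - m ≤ W := by omega
        have h2 : W - 1 - k ≤ W - 1 - m := by omega
        have hkW : ((W - 1 - m : ℕ) : ℝ) * h ≤ W * h := by gcongr
        have hmk : ((W - 1 - k : ℕ) : ℝ) * h ≤ (W - 1 - m : ℕ) * h := by gcongr
        have hm0 : 0 ≤ ((W - 1 - k : ℕ) : ℝ) * h := by positivity
        refine (hA _ x).2 ⟨hx3, ?_, ?_⟩ <;> rw [Nat.cast_add] at * <;> nlinarith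
      · refine card_le_of_forall_le_add _ _ fun k hk m hm => ?_
        have := hclose x _ _ (Finset.mem_filter.1 hm).2 (Finset.mem_filter.1 hk).2
        have h3 := Finset.mem_range.1 (Finset.mem_filter.1 hm).1
        omega
  · have hne : ∀ k, ω.real (S k) * (ω.real (A k ∩ R) / ω.real (A k)) ^ 2 ≠ 0 →
        a - l < c + k * h ∧ c + k * h < a + d := by
      intro k hk
      have : (A k ∩ R).Nonempty := by
        by_contra hempty
        rw [not_nonempty_iff_eq_empty] at hempty
        simp [hempty] at hk
      obtain ⟨x, hxA, hxR⟩ := this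
      obtain ⟨-, h1, h2⟩ := (hA k x).1 hxA
      obtain ⟨h3, h4⟩ := hRu x hxR
      constructor <;> linarith
    intro k m hk hm
    obtain ⟨hk1, -⟩ := hne k hk
    obtain ⟨-, hm2⟩ := hne m hm
    have h1 : (m : ℝ) * h < k * h + (d + l) := by linarith
    have h2 : (T : ℝ) * (l / 4) ≤ T * (W * h) := by gcongr
    have h3 : (m : ℝ) * h < (k + T * W) * h := by nlinarith
    exact_mod_cast lt_of_mul_lt_mul_right h3 hh.le

namespace Cube

variable {n : ℕ}

lemma measurableSet_set (Q : Cube n) : MeasurableSet Q.set := by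
  have : Q.set = ⋂ i, {x : Pt n | Q.c i ≤ x i} ∩ {x : Pt n | x i < Q.c i + Q.l} := by
    ext x; simp [Cube.set]
  rw [this]
  refine MeasurableSet.iInter fun i => MeasurableSet.inter ?_ ?_
  · exact measurableSet_le measurable_const (by fun_prop)
  · exact measurableSet_lt (by fun_prop) measurable_const

lemma measure_set_ne_top (Q : Cube n) (ω : Measure (Pt n)) [IsLocallyFiniteMeasure ω] :
    ω Q.set ≠ ∞ := by
  have hK : IsCompact ((WithLp.toLp 2 : (Fin n → ℝ) → Pt n) ''
      Set.Icc (fun i => Q.c i) (fun i => Q.c i + Q.l)) :=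
    isCompact_Icc.image (PiLp.continuous_toLp 2 _)
  refine measure_ne_top_of_subset (fun x hx => ?_) hK.measure_lt_top.ne
  exact ⟨fun i => x i, ⟨fun i => (hx i).1, fun i => (hx i).2.le⟩, rfl⟩

lemma child_set_subset (Q : Cube n) (e : Fin n → Bool) : (Q.child e).set ⊆ Q.set := by
  intro x hx i
  have := hx i
  have hl := Q.lpos
  simp only [child] at this
  split_ifs at this <;> constructor <;> linarith

lemma eq_of_mem_child_set (Q : Cube n) {e e' : Fin n → Bool} {x : Pt n}
    (h : x ∈ (Q.child e).set) (h' : x ∈ (Q.child e').set) : e = e' := by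
  funext i
  have h1 := h i
  have h2 := h' i
  simp only [child] at h1 h2
  cases hi : e i <;> cases hi' : e' i <;> simp [hi, hi'] at h1 h2 ⊢ <;> linarith

lemma exists_near_face_of_notMem_inn (hn : 0 < n) (Q : Cube n) {lam : ℝ} {x : Pt n}
    (hx : x ∈ Q.set) (hxi : x ∉ Q.inn lam) :
    ∃ i, x i ≤ Q.c i + lam * Q.l ∨ Q.c i + Q.l - lam * Q.l ≤ x i := by
  by_contra! hcon
  refine hxi ⟨hx, ?_⟩
  have hl := Q.lpos
  have hne : (frontier Q.set).Nonempty := by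
    rw [nonempty_frontier_iff]
    refine ⟨⟨x, hx⟩, fun huniv => ?_⟩
    have : (WithLp.toLp 2 (fun i => Q.c i + Q.l) : Pt n) ∈ Q.set := huniv ▸ mem_univ _
    exact lt_irrefl _ (this ⟨0, hn⟩).2
  obtain ⟨y, hy, hdist⟩ := isClosed_frontier.exists_infDist_eq_dist hne x
  rw [hdist]
  have hout : ∃ i, y i ≤ Q.c i ∨ Q.c i + Q.l ≤ y i := by
    by_contra! hin
    refine hy.2 (mem_interior.2 ⟨⋂ i, {z : Pt n | Q.c i < z i} ∩ {z : Pt n | z i < Q.c i + Q.l},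
      fun z hz i => ?_, isOpen_iInter_of_finite fun i => ?_, ?_⟩)
    · have := mem_iInter.1 hz i
      exact ⟨this.1.le, this.2⟩
    · exact (isOpen_lt continuous_const (by fun_prop)).inter
        (isOpen_lt (by fun_prop) continuous_const)
    · exact mem_iInter.2 fun i => hin i
  obtain ⟨i, hi⟩ := hout
  have hle : |x i - y i| ≤ dist x y := by
    rw [dist_eq_norm]
    exact PiLp.norm_apply_le (x - y) i
  obtain ⟨h1, h2⟩ := hcon i
  refine lt_of_lt_of_le ?_ hle
  rcases hi with hi | hi
  · exact lt_of_lt_of_le (by linarith) (le_abs_self _)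
  · exact lt_of_lt_of_le (by linarith) (neg_le_abs _)

/-- The part of a cube within `w` of its upper (`b = true`) or lower (`b = false`) face in the
`i`-th direction. -/
def faceSlab (Q : Cube n) (i : Fin n) (b : Bool) (w : ℝ) : Set (Pt n) :=
  {x ∈ Q.set | if b then Q.c i + Q.l - w ≤ x i else x i ≤ Q.c i + w}

lemma faceSlab_subset (Q : Cube n) (i : Fin n) (b : Bool) (w : ℝ) : Q.faceSlab i b w ⊆ Q.set :=
  fun _ hx => hx.1

lemma measurableSet_faceSlab (Q : Cube n) (i : Fin n) (b : Bool) (w : ℝ) :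
    MeasurableSet (Q.faceSlab i b w) := by
  have hi : Measurable fun x : Pt n => x i := by fun_prop
  cases b
  · have : Q.faceSlab i false w = Q.set ∩ {x | x i ≤ Q.c i + w} := by ext x; simp [faceSlab]
    rw [this]
    exact Q.measurableSet_set.inter (measurableSet_le hi measurable_const)
  · have : Q.faceSlab i true w = Q.set ∩ {x | Q.c i + Q.l - w ≤ x i} := by ext x; simp [faceSlab]
    rw [this]
    exact Q.measurableSet_set.inter (measurableSet_le measurable_const hi)

lemma measurableSet_inn (Q : Cube n) (lam : ℝ) : MeasurableSet (Q.inn lam) :=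
  Q.measurableSet_set.inter
    (measurableSet_lt measurable_const (Metric.continuous_infDist_pt _).measurable)

lemma child_diff_inn_subset (hn : 0 < n) (J : Cube n) (e : Fin n → Bool) (lam : ℝ) :
    (J.child e).set \ J.inn lam ⊆ ⋃ p : Fin n × Bool, J.faceSlab p.1 p.2 (lam * J.l) := by
  rintro x ⟨hx, hxi⟩
  have hxJ := J.child_set_subset e hx
  obtain ⟨i, hi | hi⟩ := J.exists_near_face_of_notMem_inn hn hxJ hxi
  · exact mem_iUnion.2 ⟨(i, false), hxJ, by simpa using hi⟩
  · exact mem_iUnion.2 ⟨(i, true), hxJ, by simpa using hi⟩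

lemma child_diff_inn_subset_child (hn : 0 < n) (J : Cube n) (e : Fin n → Bool) (lam : ℝ) :
    (J.child e).set \ J.inn lam ⊆
      ⋃ p : Fin n × Bool, (J.child e).faceSlab p.1 p.2 (lam * J.l) := by
  rintro x ⟨hx, hxi⟩
  have hl := J.lpos
  obtain ⟨i, hi | hi⟩ := J.exists_near_face_of_notMem_inn hn (J.child_set_subset e hx) hxi
  · refine mem_iUnion.2 ⟨(i, false), hx, ?_⟩
    simp only [child]
    split_ifs <;> simp at * <;> linarith
  · refine mem_iUnion.2 ⟨(i, true), hx, ?_⟩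
    simp only [child]
    split_ifs <;> simp at * <;> linarith

lemma trans_child (Q : Cube n) (γ : Pt n) (e : Fin n → Bool) :
    (Q.trans γ).child e = (Q.child e).trans γ := by
  simp only [trans, child, Cube.mk.injEq, and_true]
  congr 1
  funext i
  ring

end Cube

section

variable {n : ℕ}

lemma cubeAvg_indic (ω : Measure (Pt n)) (Q R : Cube n) :
    cubeAvg ω Q.set (indic R.set) = ω.real (Q.set ∩ R.set) / ω.real Q.set := by
  rw [cubeAvg, indic, integral_indicator_one R.measurableSet_set,
    measureReal_restrict_apply R.measurableSet_set, inter_comm]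
  rfl

lemma haarDiff_of_mem_child (ω : Measure (Pt n)) (Q : Cube n) (e : Fin n → Bool) (f : Pt n → ℝ)
    {x : Pt n} (hx : x ∈ (Q.child e).set) :
    haarDiff ω Q f x = cubeAvg ω (Q.child e).set f - cubeAvg ω Q.set f := by
  rw [haarDiff, Finset.sum_eq_single e, indicator_of_mem hx]
  · intro e' _ hne
    exact indicator_of_notMem (fun h => hne (Q.eq_of_mem_child_set h hx)) _
  · simp

lemma lintegral_haarDiff_sq_le (ω : Measure (Pt n)) [IsLocallyFiniteMeasure ω] (J R : Cube n)
    (e : Fin n → Bool) (lam : ℝ) :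
    ∫⁻ x in (J.child e).set \ J.inn lam, ENNReal.ofReal ((haarDiff ω J (indic R.set) x) ^ 2) ∂ω
      ≤ ENNReal.ofReal (2 * (ω.real ((J.child e).set \ J.inn lam)
          * (ω.real ((J.child e).set ∩ R.set) / ω.real (J.child e).set) ^ 2)
        + 2 * (ω.real ((J.child e).set \ J.inn lam)
          * (ω.real (J.set ∩ R.set) / ω.real J.set) ^ 2)) := by
  set p := ω.real ((J.child e).set ∩ R.set) / ω.real (J.child e).set with hp
  set q := ω.real (J.set ∩ R.set) / ω.real J.set with hq
  set A := (J.child e).set \ J.inn lam with hA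
  have hAm : MeasurableSet A := (J.child e).measurableSet_set.diff (J.measurableSet_inn lam)
  have hAf : ω A ≠ ∞ := measure_ne_top_of_subset sdiff_subset ((J.child e).measure_set_ne_top ω)
  calc ∫⁻ x in A, ENNReal.ofReal ((haarDiff ω J (indic R.set) x) ^ 2) ∂ω
      = ∫⁻ x in A, ENNReal.ofReal ((p - q) ^ 2) ∂ω := by
        refine setLIntegral_congr_fun hAm fun x hx => ?_
        rw [haarDiff_of_mem_child ω J e _ hx.1, cubeAvg_indic, cubeAvg_indic]
    _ = ENNReal.ofReal ((p - q) ^ 2 * ω.real A) := by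
        rw [setLIntegral_const, ENNReal.ofReal_mul (by positivity), ofReal_measureReal hAf]
    _ ≤ _ := by
        refine ENNReal.ofReal_le_ofReal ?_
        have : 0 ≤ ω.real A := measureReal_nonneg
        nlinarith [mul_nonneg this (sq_nonneg (p + q))]

lemma measureReal_mul_sq_average_le (ω : Measure (Pt n)) [IsLocallyFiniteMeasure ω]
    (Q R : Cube n) {A : Set (Pt n)} (hA : A ⊆ Q.set) :
    ω.real A * (ω.real (Q.set ∩ R.set) / ω.real Q.set) ^ 2 ≤ ω.real R.set := by
  have h1 : ω.real A ≤ ω.real Q.set := measureReal_mono hA (Q.measure_set_ne_top ω)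
  have h2 : ω.real (Q.set ∩ R.set) ≤ ω.real R.set :=
    measureReal_mono inter_subset_right (R.measure_set_ne_top ω)
  have h3 : ω.real (Q.set ∩ R.set) ≤ ω.real Q.set :=
    measureReal_mono inter_subset_left (Q.measure_set_ne_top ω)
  have h4 : ω.real (Q.set ∩ R.set) / ω.real Q.set ≤ 1 :=
    div_le_one_of_le₀ h3 measureReal_nonneg
  calc ω.real A * (ω.real (Q.set ∩ R.set) / ω.real Q.set) ^ 2
      ≤ ω.real Q.set * (ω.real (Q.set ∩ R.set) / ω.real Q.set) ^ 1 := by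
        refine mul_le_mul h1 (pow_le_pow_of_le_one (by positivity) h4 (by norm_num))
          (by positivity) (by positivity)
    _ ≤ ω.real (Q.set ∩ R.set) := by
        rw [pow_one]
        rw [← mul_div_assoc]
        exact div_le_of_le_mul₀ measureReal_nonneg measureReal_nonneg (by rw [mul_comm])
    _ ≤ _ := h2

/-- The contribution of one face of `Q` to the surgery estimate. -/
def faceTerm (ω : Measure (Pt n)) (R Q : Cube n) (w : ℝ) (p : Fin n × Bool) : ℝ :=
  ω.real (Q.faceSlab p.1 p.2 w) * (ω.real (Q.set ∩ R.set) / ω.real Q.set) ^ 2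

lemma measureReal_mul_le_sum_faceTerm (ω : Measure (Pt n)) [IsLocallyFiniteMeasure ω]
    (Q R : Cube n) {A : Set (Pt n)} {w : ℝ}
    (hA : A ⊆ ⋃ p : Fin n × Bool, Q.faceSlab p.1 p.2 w) :
    ω.real A * (ω.real (Q.set ∩ R.set) / ω.real Q.set) ^ 2
      ≤ ∑ p : Fin n × Bool, faceTerm ω R Q w p := by
  simp only [faceTerm]
  rw [← Finset.sum_mul]
  gcongr
  refine (measureReal_mono hA ?_).trans (measureReal_iUnion_fintype_le _)
  exact measure_ne_top_of_subset (iUnion_subset fun p => Q.faceSlab_subset _ _ _)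
    (Q.measure_set_ne_top ω)

lemma card_mul_sum_le_of_update {K : ℕ} (i : Fin n) (F : (Fin n → Fin K) → ℝ) {B : ℝ}
    (hF : ∀ idx, ∑ k, F (Function.update idx i k) ≤ B) :
    K * ∑ idx, F idx ≤ Fintype.card (Fin n → Fin K) * B := by
  have hswap : ∑ idx : Fin n → Fin K, ∑ k, F (Function.update idx i k) = K * ∑ idx, F idx := by
    let φ := Equiv.funSplitAt i (Fin K)
    have hupd : ∀ (a k : Fin K) y, Function.update (φ.symm (a, y)) i k = φ.symm (k, y) := by
      intro a k y
      funext j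
      by_cases hj : j = i
      · subst hj; simp [φ, Equiv.funSplitAt, Equiv.piSplitAt]
      · simp [φ, Equiv.funSplitAt, Equiv.piSplitAt, hj]
    rw [← φ.symm.sum_comp, ← φ.symm.sum_comp F, Fintype.sum_prod_type, Fintype.sum_prod_type]
    simp only [hupd, Finset.sum_const, Finset.card_univ, Fintype.card_fin, nsmul_eq_mul]
    rw [Finset.sum_comm]
  rw [← hswap]
  refine (Finset.sum_le_sum fun idx _ => hF idx).trans ?_
  simp

lemma sum_faceTerm_update_le (ω : Measure (Pt n)) [IsLocallyFiniteMeasure ω] (Q R : Cube n)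
    (p : Fin n × Bool) {w : ℝ} (M : ℕ) {K : ℕ} (T : ℕ) (hhw : (2 : ℝ) ^ (-(M : ℤ)) ≤ w)
    (hwl : 4 * w ≤ Q.l) (hT : 4 * R.l + 5 * Q.l ≤ T * Q.l) (idx : Fin n → Fin K) :
    ∑ k, faceTerm ω R (Q.trans (gamOf M (Function.update idx p.1 k))) w p
      ≤ T * (2 * ((⌊w / (2 : ℝ) ^ (-(M : ℤ))⌋₊ + 1 : ℕ) * ω.real R.set)) := by
  obtain ⟨i, b⟩ := p
  set h : ℝ := (2 : ℝ) ^ (-(M : ℤ)) with hh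
  let γ : ℕ → Pt n := fun k => WithLp.toLp 2 fun j => if j = i then k * h else idx j * h
  have hγ : ∀ k : Fin K, gamOf M (Function.update idx i k) = γ k := by
    intro k
    simp only [gamOf, γ]
    congr 1
    funext j
    by_cases hj : j = i
    · subst hj; simp [hh]
    · simp [hj, hh]
  have hγi : ∀ k, (Q.trans (γ k)).c i = Q.c i + k * h := fun k => by simp [Cube.trans, γ]
  have hγl : ∀ k, (Q.trans (γ k)).l = Q.l := fun k => rfl
  simp only [hγ]
  rw [Fin.sum_univ_eq_sum_range (fun k => faceTerm ω R (Q.trans (γ k)) w (i, b)) K]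
  refine sum_slab_le ω (fun x => x i)
    {x | ∀ j, j ≠ i → Q.c j + idx j * h ≤ x j ∧ x j < Q.c j + idx j * h + Q.l} R.set
    (fun k => (Q.trans (γ k)).set) (fun k => (Q.trans (γ k)).faceSlab i b w) b
    (c := Q.c i) (h := h) (l := Q.l) (w := w) (a := R.c i) (d := R.l) T
    (fun k => Cube.measurableSet_faceSlab _ _ _ _) R.measurableSet_set
    (fun k => Cube.measure_set_ne_top _ ω) (R.measure_set_ne_top ω) (by positivity) hhw hwl hT
    (fun k x => ?_) (fun k x => ?_) (fun x hx => hx i) K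
  · constructor
    · intro hx
      refine ⟨fun j hj => ?_, ?_⟩
      · simpa [Cube.trans, γ, hj] using hx j
      · simpa [Cube.trans, γ] using hx i
    · rintro ⟨h1, h2⟩ j
      by_cases hj : j = i
      · subst hj; simpa [Cube.trans, γ] using h2
      · simpa [Cube.trans, γ, hj] using h1 j hj
  · simp only [Cube.faceSlab, mem_ofPred_eq, hγi, hγl]

end

/-- **Key surgery estimate.** Let `ω` be locally finite, `J, R` be `ρ`-close cubes, `J'` a
dyadic child of `J`, `λ ∈ (0,1/2)`. Averaging over the translation parameterization of
dyadic grids (translations of step `2^{-M}` bounded by `2^{-N}`),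
`𝔼_Ω ∫_{(J+γ)' ∖ (J+γ)_λ} |Δ_{J+γ}^ω 1_R|² dω ≤ C √λ ω(R)`,
with `C` depending only on `n` and `ρ`. -/
theorem keySurgeryEstimate (n ρ : ℕ) (hn : 0 < n) :
    ∃ C : ℝ, 0 < C ∧
      ∀ ω : Measure (Pt n), IsLocallyFiniteMeasure ω →
      ∀ J R : Cube n, rhoClose ρ J R →
      ∀ lam : ℝ, 0 < lam → lam < 1/2 →
      ∀ e : Fin n → Bool,
      ∀ (M : ℕ) (N : ℤ), N < 0 →
      (2:ℝ) ^ (-(M:ℤ)) ≤ lam * J.l → R.l ≤ (2:ℝ) ^ (-N) →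
      (∑ idx : Fin n → Fin (2 ^ ((M - N).toNat)),
            ∫⁻ x in ((J.trans (gamOf M idx)).child e).set \ (J.trans (gamOf M idx)).inn lam,
              ENNReal.ofReal ((haarDiff ω (J.trans (gamOf M idx)) (indic R.set) x) ^ 2) ∂ω) /
          (Fintype.card (Fin n → Fin (2 ^ ((M - N).toNat))) : ℝ≥0∞)
        ≤ ENNReal.ofReal (C * Real.sqrt lam) * ω R.set := by
  set T : ℕ := 8 * 2 ^ ρ + 5 with hTdef
  refine ⟨32 * n * T * 2 ^ ρ + 16, by positivity, ?_⟩
  intro ω hω J R hJR lam hlam0 hlam1 e M N hN hM hRN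
  obtain ⟨hc1, hc2, -⟩ := hJR
  have hJR1 : J.l ≤ 2 ^ ρ * R.l := by
    rw [zpow_neg, zpow_natCast, inv_mul_le_iff₀ (by positivity)] at hc1
    exact hc1
  have hJR2 : R.l ≤ 2 ^ ρ * J.l := by rwa [zpow_natCast] at hc2
  have hJl := J.lpos
  have hRl := R.lpos
  set K : ℕ := 2 ^ ((M - N).toNat) with hK
  have hKh : (K : ℝ) * (2 : ℝ) ^ (-(M : ℤ)) = (2 : ℝ) ^ (-N) := by
    rw [hK, Nat.cast_pow, Nat.cast_ofNat, ← zpow_natCast, Int.toNat_of_nonneg (by omega),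
      ← zpow_add₀ two_ne_zero]
    congr 1
    ring
  have hK0 : (0 : ℝ) < K := by rw [hK]; positivity
  set r := ω.real R.set with hr
  have hr0 : 0 ≤ r := measureReal_nonneg
  have hsq : lam ≤ Real.sqrt lam := Real.le_sqrt_of_sq_le (by nlinarith)
  set F : (Fin n → Fin K) → ℝ := fun idx =>
    2 * (ω.real (((J.trans (gamOf M idx)).child e).set \ (J.trans (gamOf M idx)).inn lam)
      * (ω.real (((J.trans (gamOf M idx)).child e).set ∩ R.set)
        / ω.real ((J.trans (gamOf M idx)).child e).set) ^ 2)
    + 2 * (ω.real (((J.trans (gamOf M idx)).child e).set \ (J.trans (gamOf M idx)).inn lam)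
      * (ω.real ((J.trans (gamOf M idx)).set ∩ R.set)
        / ω.real (J.trans (gamOf M idx)).set) ^ 2) with hF
  have hF0 : ∀ idx, 0 ≤ F idx := fun idx => by simp only [hF]; positivity
  suffices hmain : ∑ idx, F idx ≤
      Fintype.card (Fin n → Fin K) * ((32 * n * T * 2 ^ ρ + 16) * Real.sqrt lam * r) by
    refine ENNReal.div_le_of_le_mul ?_
    calc _ ≤ ∑ idx, ENNReal.ofReal (F idx) :=
          Finset.sum_le_sum fun idx _ => lintegral_haarDiff_sq_le ω _ R e lam
      _ = ENNReal.ofReal (∑ idx, F idx) := (ENNReal.ofReal_sum_of_nonneg fun idx _ => hF0 idx).symm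
      _ ≤ _ := ENNReal.ofReal_le_ofReal hmain
      _ = _ := by
        rw [ENNReal.ofReal_mul (by positivity), ENNReal.ofReal_natCast,
          ENNReal.ofReal_mul (by positivity), hr, ofReal_measureReal (R.measure_set_ne_top ω),
          mul_comm]
  by_cases hlam : 1 / 8 ≤ lam
  · have hF4 : ∀ idx, F idx ≤ 4 * r := fun idx => by
      have h1 := measureReal_mul_sq_average_le ω ((J.trans (gamOf M idx)).child e) R
        (A := ((J.trans (gamOf M idx)).child e).set \ (J.trans (gamOf M idx)).inn lam) sdiff_subset
      have h2 := measureReal_mul_sq_average_le ω (J.trans (gamOf M idx)) R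
        (A := ((J.trans (gamOf M idx)).child e).set \ (J.trans (gamOf M idx)).inn lam)
        (sdiff_subset.trans (Cube.child_set_subset _ e))
      simp only [hF]
      linarith
    have hs : 1 / 4 ≤ Real.sqrt lam := Real.le_sqrt_of_sq_le (by linarith)
    refine (Finset.sum_le_sum fun idx _ => hF4 idx).trans ?_
    rw [Finset.sum_const, Finset.card_univ, nsmul_eq_mul]
    gcongr
    have : 0 ≤ 32 * n * T * 2 ^ ρ * Real.sqrt lam := by positivity
    nlinarith
  push Not at hlam
  set w := lam * J.l with hw
  have hw8 : 8 * w ≤ J.l := by nlinarith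
  have hq : ((⌊w / (2 : ℝ) ^ (-(M : ℤ))⌋₊ + 1 : ℕ) : ℝ) ≤ K * (2 * lam * 2 ^ ρ) := by
    have hh : (0 : ℝ) < (2 : ℝ) ^ (-(M : ℤ)) := by positivity
    have hw0 : 0 < w := by positivity
    have h1 := Nat.floor_le (a := w / (2 : ℝ) ^ (-(M : ℤ))) (by positivity)
    have h2 : 1 ≤ w / (2 : ℝ) ^ (-(M : ℤ)) := (one_le_div hh).2 hM
    have h3 : w / (2 : ℝ) ^ (-(M : ℤ)) ≤ K * (lam * 2 ^ ρ) := by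
      rw [div_le_iff₀ hh]
      calc w ≤ lam * (2 ^ ρ * (2 : ℝ) ^ (-N)) := by
            rw [hw]
            gcongr
            exact hJR1.trans (by gcongr)
        _ = _ := by rw [← hKh]; ring
    push_cast
    linarith
  have hface : ∀ Q : Cube n, J.l / 2 ≤ Q.l → ∀ p : Fin n × Bool,
      ∑ idx : Fin n → Fin K, faceTerm ω R (Q.trans (gamOf M idx)) w p
        ≤ Fintype.card (Fin n → Fin K) * (4 * T * 2 ^ ρ * lam * r) := by
    intro Q hQ p
    have hTQ : 4 * R.l + 5 * Q.l ≤ T * Q.l := by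
      have : (2 : ℝ) ^ ρ * J.l ≤ 2 ^ ρ * (2 * Q.l) := by gcongr; linarith
      rw [hTdef]
      push_cast
      nlinarith
    have h1 := card_mul_sum_le_of_update p.1
      (fun idx : Fin n → Fin K => faceTerm ω R (Q.trans (gamOf M idx)) w p) fun idx =>
      sum_faceTerm_update_le ω Q R p M T hM (by linarith) hTQ idx
    refine le_of_mul_le_mul_left (h1.trans ?_) hK0
    calc _ ≤ Fintype.card (Fin n → Fin K) * (T * (2 * ((K * (2 * lam * 2 ^ ρ)) * r))) := by gcongr
      _ = _ := by ring
  have hFle : ∀ idx, F idx ≤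
      2 * (∑ p, faceTerm ω R ((J.child e).trans (gamOf M idx)) w p)
        + 2 * ∑ p, faceTerm ω R (J.trans (gamOf M idx)) w p := by
    intro idx
    have h1 := measureReal_mul_le_sum_faceTerm ω _ R
      (Cube.child_diff_inn_subset_child hn (J.trans (gamOf M idx)) e lam)
    have h2 := measureReal_mul_le_sum_faceTerm ω _ R
      (Cube.child_diff_inn_subset hn (J.trans (gamOf M idx)) e lam)
    rw [← Cube.trans_child]
    simp only [hF]
    have hwt : w = lam * (J.trans (gamOf M idx)).l := rfl
    rw [hwt]
    gcongr
  calc ∑ idx, F idx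
      ≤ ∑ idx : Fin n → Fin K, (2 * (∑ p, faceTerm ω R ((J.child e).trans (gamOf M idx)) w p)
        + 2 * ∑ p, faceTerm ω R (J.trans (gamOf M idx)) w p) :=
        Finset.sum_le_sum fun idx _ => hFle idx
    _ = 2 * (∑ p, ∑ idx : Fin n → Fin K, faceTerm ω R ((J.child e).trans (gamOf M idx)) w p)
        + 2 * ∑ p, ∑ idx : Fin n → Fin K, faceTerm ω R (J.trans (gamOf M idx)) w p := by
        rw [Finset.sum_add_distrib, ← Finset.mul_sum, ← Finset.mul_sum, Finset.sum_comm]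
        congr 2
        rw [Finset.sum_comm]
    _ ≤ 2 * (∑ _p : Fin n × Bool, Fintype.card (Fin n → Fin K) * (4 * T * 2 ^ ρ * lam * r))
        + 2 * ∑ _p : Fin n × Bool, Fintype.card (Fin n → Fin K) * (4 * T * 2 ^ ρ * lam * r) := by
        gcongr with p _ p _
        · exact hface _ le_rfl p
        · exact hface _ (by linarith) p
    _ = Fintype.card (Fin n → Fin K) * (32 * n * T * 2 ^ ρ * lam * r) := by
        rw [Finset.sum_const, Finset.card_univ, Fintype.card_prod, Fintype.card_fin,
          Fintype.card_bool, nsmul_eq_mul]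
        push_cast
        ring
    _ ≤ _ := by
        gcongr
        linarith
end
end
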